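/- Let d ≥ 1 and S = C([0,1];ℝ^d) × [0,1], where C([0,1];ℝ^d) carries the supremum metric. Then there exists a countable set 𝒞 of bounded continuous non-anticipative functions φ: S → ℝ such that every bounded continuous non-anticipative function f: S → ℝ is the pointwise limit of a nondecreasing sequence of elements of 𝒞; that is, there are g_k ∈ 𝒞, each bounded continuous and non-anticipative, with g_k ≤ g_{k+1} pointwise for all k and g_k(x) → f(x) for every x ∈ S. -/

import Mathlib

/-!
Stopping a path, `(f, t) ↦ (f^t, t)`, is a continuous self-map of `S = C([0,1];ℝ^d) × [0,1]`, and a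
function `φ` is non-anticipative exactly when it factors through it. Hence it suffices to find, on
an arbitrary separable metric space, a countable family of bounded continuous functions from which
every bounded continuous function is an increasing limit (`exists_countable_monotone_approx`), and
to compose its members with the stopping map.

For the metric statement, take the truncated cones `y ↦ a - n * min (dist y z) 1` with `a` rational,
`n` natural and `z` in a countable dense set. Every bounded continuous function is the pointwise
supremum of the cones below it (`exists_cone_le`). These are countably many, so the maxima of the
first `k` of them form a nondecreasing sequence with the required limit; the countable family
consists of all finite maxima of cones.
-/

open MeasureTheory Set Filter

noncomputable section

/-- The path space `𝒳 = C([0,1];ℝ^d)` with the supremum norm. -/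
abbrev PathSp (d : ℕ) := C(unitInterval, EuclideanSpace ℝ (Fin d))

/-- A function `φ : C([0,1];ℝ^d) × [0,1] → ℝ` is non-anticipative if `φ(f,t)` only
depends on the restriction of `f` to `[0,t]`. -/
def NonAnticipative {d : ℕ} (φ : PathSp d × unitInterval → ℝ) : Prop :=
  ∀ (f g : PathSp d) (t : unitInterval),
    (∀ s : unitInterval, s ≤ t → f s = g s) → φ (f, t) = φ (g, t)

/-- The truncated cone with apex `(z, a)` and slope `n`, where `z` is the `p.1`-th point of a fixed
dense sequence, `a = p.2.1` and `n = p.2.2`. Truncating the distance at `1` keeps it bounded. -/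
def cone (X : Type*) [PseudoMetricSpace X] [TopologicalSpace.SeparableSpace X] [Nonempty X]
    (p : ℕ × ℚ × ℕ) (y : X) : ℝ :=
  p.2.1 - p.2.2 * min (dist y (TopologicalSpace.denseSeq X p.1)) 1

section Metric

variable {X : Type*} [PseudoMetricSpace X] [TopologicalSpace.SeparableSpace X] [Nonempty X]

lemma continuous_cone (p : ℕ × ℚ × ℕ) : Continuous (cone X p) := by
  unfold cone
  fun_prop

lemma bounded_cone (p : ℕ × ℚ × ℕ) : ∃ C : ℝ, ∀ y, |cone X p y| ≤ C := by
  refine ⟨|(p.2.1 : ℝ)| + p.2.2, fun y => ?_⟩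
  have h0 : 0 ≤ min (dist y (TopologicalSpace.denseSeq X p.1)) 1 := le_min dist_nonneg zero_le_one
  have h1 : min (dist y (TopologicalSpace.denseSeq X p.1)) 1 ≤ 1 := min_le_right _ _
  have hn : (0 : ℝ) ≤ p.2.2 := Nat.cast_nonneg _
  unfold cone
  refine (abs_sub _ _).trans ?_
  rw [abs_of_nonneg (mul_nonneg hn h0)]
  nlinarith

/-- A bounded continuous function is the pointwise supremum of the cones below it. -/
lemma exists_cone_le {f : X → ℝ} (hf : Continuous f) {C : ℝ} (hC : ∀ x, |f x| ≤ C)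
    (x : X) {ε : ℝ} (hε : 0 < ε) :
    ∃ p, cone X p ≤ f ∧ f x - ε < cone X p x := by
  obtain ⟨a, ha1, ha2⟩ := exists_rat_btwn (show f x - ε < f x by linarith)
  obtain ⟨δ, hδ, hball⟩ := Metric.eventually_nhds_iff.1
    (hf.continuousAt.eventually (lt_mem_nhds ha2) : ∀ᶠ y in nhds x, (a : ℝ) < f y)
  have hr : 0 < min (δ / 2) 1 := lt_min (by linarith) one_pos
  -- The slope `n` brings the cone below `-C` at distance `δ / 2` from its apex.
  obtain ⟨n, hn⟩ := exists_nat_ge ((a + C) / min (δ / 2) 1)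
  rw [div_le_iff₀ hr] at hn
  have hn0 : (0 : ℝ) ≤ n := Nat.cast_nonneg _
  -- The apex is so close to `x` that the cone loses less than `a - (f x - ε)` there.
  have hη : 0 < min (δ / 2) ((a - (f x - ε)) / (n + 1)) :=
    lt_min (by linarith) (div_pos (by linarith) (by linarith))
  obtain ⟨i, hi⟩ := (TopologicalSpace.denseRange_denseSeq X).exists_dist_lt x hη
  obtain ⟨hi1, hi2⟩ := lt_min_iff.1 hi
  rw [lt_div_iff₀ (by linarith)] at hi2
  refine ⟨(i, a, n), fun y => ?_, ?_⟩
  · simp only [cone]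
    by_cases hy : dist y x < δ
    · have h0 : 0 ≤ min (dist y (TopologicalSpace.denseSeq X i)) 1 := le_min dist_nonneg zero_le_one
      have := hball hy
      nlinarith
    · have htri := dist_triangle_right y x (TopologicalSpace.denseSeq X i)
      have hd : min (δ / 2) 1 ≤ min (dist y (TopologicalSpace.denseSeq X i)) 1 :=
        min_le_min_right _ (by linarith)
      have := mul_le_mul_of_nonneg_left hd hn0
      have := (abs_le.1 (hC y)).1
      linarith
  · simp only [cone]
    have h1 := mul_le_mul_of_nonneg_left
      (min_le_left (dist x (TopologicalSpace.denseSeq X i)) 1) hn0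
    have h2 : 0 ≤ dist x (TopologicalSpace.denseSeq X i) := dist_nonneg
    linarith

variable (X) in
lemma exists_countable_monotone_approx :
    ∃ 𝒟 : Set (X → ℝ), 𝒟.Countable ∧
      (∀ g ∈ 𝒟, Continuous g ∧ ∃ C : ℝ, ∀ x, |g x| ≤ C) ∧
      ∀ f : X → ℝ, Continuous f → (∃ C : ℝ, ∀ x, |f x| ≤ C) →
        ∃ g : ℕ → X → ℝ, (∀ k, g k ∈ 𝒟) ∧ (∀ k x, g k x ≤ g (k + 1) x) ∧
          ∀ x, Tendsto (fun k => g k x) atTop (nhds (f x)) := by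
  refine ⟨range fun s : {s : Finset (ℕ × ℚ × ℕ) // s.Nonempty} => s.1.sup' s.2 (cone X),
    countable_range _, ?_, ?_⟩
  · rintro _ ⟨s, rfl⟩
    refine Finset.sup'_induction (p := fun g : X → ℝ => Continuous g ∧ ∃ C : ℝ, ∀ x, |g x| ≤ C)
      s.2 (cone X) ?_ fun p _ => ⟨continuous_cone p, bounded_cone p⟩
    rintro g ⟨hg, C, hC⟩ h ⟨hh, D, hD⟩
    refine ⟨hg.sup hh, max C D, fun x => ?_⟩
    exact (abs_max_le_max_abs_abs).trans (max_le_max (hC x) (hD x))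
  · rintro f hf ⟨C, hC⟩
    have hne : {p | cone X p ≤ f}.Nonempty := by
      obtain ⟨p, hp, -⟩ := exists_cone_le hf hC (Classical.arbitrary X) one_pos
      exact ⟨p, hp⟩
    obtain ⟨e, he⟩ := (to_countable {p | cone X p ≤ f}).exists_eq_range hne
    have hle : ∀ j, cone X (e j) ≤ f := fun j => by
      have : e j ∈ {p | cone X p ≤ f} := he ▸ mem_range_self j
      exact this
    have hmono : Monotone (partialSups fun j => cone X (e j)) := (partialSups _).monotone
    refine ⟨fun k => partialSups (fun j => cone X (e j)) k, fun k => ?_,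
      fun k x => hmono k.le_succ x, fun x => ?_⟩
    · refine ⟨⟨(Finset.range (k + 1)).image e, by simp⟩, ?_⟩
      simp only [Finset.sup'_image, partialSups_eq_sup'_range]
      rfl
    · refine tendsto_atTop_isLUB (fun k l hkl => hmono hkl x) ⟨?_, fun b hb => ?_⟩
      · rintro _ ⟨k, rfl⟩
        exact partialSups_le _ k f (fun j _ => hle j) x
      · refine le_of_forall_pos_lt_add fun ε hε => ?_
        obtain ⟨p, hp, hpx⟩ := exists_cone_le hf hC x hε
        obtain ⟨j, rfl⟩ : p ∈ range e := he ▸ hp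
        have h1 : cone X (e j) x ≤ partialSups (fun j => cone X (e j)) j x :=
          le_partialSups (fun j => cone X (e j)) j x
        have h2 := hb (mem_range_self j)
        dsimp only at h2
        linarith

end Metric

/-- The stopping map `(f, t) ↦ (f^t, t)`, where `f^t s = f (min s t)`. -/
def stopMap {d : ℕ} (x : PathSp d × unitInterval) : PathSp d × unitInterval :=
  (x.1.comp ⟨fun s => min s x.2, by fun_prop⟩, x.2)

lemma continuous_stopMap {d : ℕ} : Continuous (stopMap (d := d)) := by
  refine Continuous.prodMk (continuous_fst.compCM ?_) continuous_snd
  refine ContinuousMap.continuous_of_continuous_uncurry _ ?_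
  change Continuous fun q : (PathSp d × unitInterval) × unitInterval => min q.2 q.1.2
  fun_prop

lemma NonAnticipative.apply_stopMap {d : ℕ} {φ : PathSp d × unitInterval → ℝ}
    (hφ : NonAnticipative φ) (x : PathSp d × unitInterval) : φ (stopMap x) = φ x :=
  hφ _ _ _ fun s hs => by simp [min_eq_left hs]

lemma nonAnticipative_comp_stopMap {d : ℕ} (φ : PathSp d × unitInterval → ℝ) :
    NonAnticipative (φ ∘ stopMap) := by
  intro f g t h
  have : stopMap (f, t) = stopMap (g, t) := by
    refine Prod.ext (ContinuousMap.ext fun s => ?_) rfl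
    exact h _ (min_le_right s t)
  simp [this]

/-- On `S = C([0,1];ℝ^d) × [0,1]` there is a countable family `𝒞` of
bounded continuous non-anticipative functions such that every bounded continuous
non-anticipative `f : S → ℝ` is the pointwise limit of a nondecreasing sequence of
elements of `𝒞`. -/
theorem stmt16 (d : ℕ) (hd : 1 ≤ d) :
    ∃ 𝒞 : Set ((PathSp d × unitInterval) → ℝ),
      𝒞.Countable ∧
      (∀ g ∈ 𝒞, Continuous g ∧ (∃ C : ℝ, ∀ x, |g x| ≤ C) ∧ NonAnticipative g) ∧
      ∀ f : (PathSp d × unitInterval) → ℝ,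
        Continuous f → (∃ C : ℝ, ∀ x, |f x| ≤ C) → NonAnticipative f →
        ∃ g : ℕ → (PathSp d × unitInterval) → ℝ,
          (∀ k, g k ∈ 𝒞) ∧ (∀ k x, g k x ≤ g (k + 1) x) ∧
          ∀ x, Tendsto (fun k => g k x) atTop (nhds (f x)) := by
  obtain ⟨𝒟, hcount, hgood, happrox⟩ :=
    exists_countable_monotone_approx (PathSp d × unitInterval)
  refine ⟨(fun φ => φ ∘ stopMap) '' 𝒟, hcount.image _, ?_, fun f hf hb hna => ?_⟩
  · rintro _ ⟨φ, hφ, rfl⟩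
    obtain ⟨hcont, C, hC⟩ := hgood φ hφ
    exact ⟨hcont.comp continuous_stopMap, ⟨C, fun x => hC _⟩, nonAnticipative_comp_stopMap φ⟩
  · obtain ⟨g, hg, hmono, hlim⟩ := happrox f hf hb
    refine ⟨fun k => g k ∘ stopMap, fun k => mem_image_of_mem _ (hg k), fun k x => hmono k _,
      fun x => ?_⟩
    rw [← hna.apply_stopMap x]
    exact hlim (stopMap x)
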